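/- Let $0 < t_1 < \cdots < t_n < t_{n+1}$, let $\Sigma_n$ be the $n \times n$ matrix with $\{\Sigma_n\}_{ij} = u(t_{\min(i,j)}) v(t_{\max(i,j)})$, and let $s \in \mathbb{R}^n$ have components $s_i = e^{B(t_{n+1}) - B(t_i)} \, u(t_i) v(t_i)$. Then the Schur complement satisfies $u(t_{n+1}) v(t_{n+1}) - s^{\mathsf{T}} \Sigma_n^{-1} s = e^{2B(t_{n+1})} \int_{t_n}^{t_{n+1}} e^{-2B(\nu)} \sigma^2(\nu)\, d\nu$, and this quantity is strictly positive. -/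

import Mathlib

open MeasureTheory Matrix

/-!
Write `I r = ∫_0^r exp (-2 B) σ²`, so that `Σ i j = exp (B tᵢ) exp (B tⱼ) I (min tᵢ tⱼ)`.
The vector `s` is a multiple of the last column of `Σ`, namely `s = Σ (c • e_last)` with
`c = exp (B t_{n+1} - B t_n)`. Hence, once `Σ` is invertible, `Σ⁻¹ s = c • e_last`, and the
quadratic form is `c * s_last = exp (2 B t_{n+1}) I (t_n)`; subtracting it from
`exp (2 B t_{n+1}) I (t_{n+1})` leaves the integral over `[t_n, t_{n+1}]`.

Invertibility comes from the factorisation of the Brownian-type kernel `b (min i j)` into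
triangular matrices with the increments of `b` on the diagonal (`det_min_ne_zero`), and these
increments are positive because `σ > 0` almost everywhere (`integral_weight_pos`).
-/

/-- A continuous integrand that is nonnegative, and positive on the dense set where `σ > 0`,
has positive integral over every nondegenerate interval. -/
lemma integral_weight_pos {B σ : ℝ → ℝ} (hB : Continuous B) (hσ : Continuous σ)
    (hσpos : ∀ᵐ s ∂(volume : Measure ℝ), 0 < σ s) {a b : ℝ} (hab : a < b) :
    0 < ∫ ν in a..b, Real.exp (-2 * B ν) * σ ν ^ 2 := by
  obtain ⟨c, hc, hcab⟩ := (Measure.dense_of_ae hσpos).exists_between hab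
  have hc' : 0 < σ c := hc
  refine intervalIntegral.integral_pos hab (by fun_prop) (fun x _ => by positivity)
    ⟨c, ⟨hcab.1.le, hcab.2.le⟩, by positivity⟩

/-- The kernel `b (min i j + 1)` is the product of the lower triangular matrix of ones and the
upper triangular matrix whose row `k` carries the increment `b (k + 1) - b k`. -/
lemma det_min_ne_zero (m : ℕ) (b : ℕ → ℝ) (hb0 : b 0 = 0) (hb : ∀ k < m, b k < b (k + 1)) :
    (Matrix.of fun i j : Fin m => b (min (i : ℕ) j + 1)).det ≠ 0 := by
  have hfac : (Matrix.of fun i j : Fin m => b (min (i : ℕ) j + 1)) =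
      (Matrix.of fun i k : Fin m => if k ≤ i then (1 : ℝ) else 0) *
      (Matrix.of fun k j : Fin m => if k ≤ j then b (k + 1) - b k else 0) := by
    ext i j
    simp only [Matrix.mul_apply, Matrix.of_apply, ite_mul, one_mul, zero_mul, ← ite_and,
      Fin.le_def]
    rw [Fin.sum_univ_eq_sum_range
      (fun k => if k ≤ (i : ℕ) ∧ k ≤ (j : ℕ) then b (k + 1) - b k else 0) m,
      ← Finset.sum_filter]
    have hrange : (Finset.range m).filter (fun k => k ≤ (i : ℕ) ∧ k ≤ (j : ℕ)) =
        Finset.range (min (i : ℕ) j + 1) := by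
      ext k
      simp only [Finset.mem_filter, Finset.mem_range]
      omega
    rw [hrange, Finset.sum_range_sub, hb0, sub_zero]
  rw [hfac, Matrix.det_mul, Matrix.det_of_isLowerTriangular, Matrix.det_of_isUpperTriangular]
  · simp only [Matrix.of_apply, le_refl, if_true, Finset.prod_const_one, one_mul]
    exact Finset.prod_ne_zero_iff.mpr fun k _ => (sub_pos.mpr (hb k k.2)).ne'
  · intro i j hij
    have hji : j < i := hij
    simp [not_le.mpr hji]
  · intro i j hij
    have hlt : i < j := hij
    simp [not_le.mpr hlt]

/-- the Schur complement of the covariance matrix at a new sampling time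
`t (n+1)` equals `exp (2 B t_{n+1}) * ∫_{t_n}^{t_{n+1}} exp (-2 B ν) σ² ν dν > 0`.
Here the times are `0 < t 0 < ⋯ < t (n+1)` (indexed by `Fin (n+2)`), the matrix `Σ`
is over the first `n+1` times, `u t = exp (B t) * ∫_0^t exp (-2 B ν) σ² ν dν`,
`v t = exp (B t)`, and `s i = exp (B (t last) - B (t i)) * (u (t i) * v (t i))`. -/
theorem stmt_3 (n : ℕ) (B σ : ℝ → ℝ) (hB : Continuous B) (hσ : Continuous σ)
    (hσpos : ∀ᵐ s ∂(volume : Measure ℝ), 0 < σ s)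
    (t : Fin (n + 2) → ℝ) (ht0 : 0 < t 0) (htmono : StrictMono t)
    (u v : ℝ → ℝ)
    (hu : u = fun r => Real.exp (B r) * ∫ ν in (0:ℝ)..r, Real.exp (-2 * B ν) * σ ν ^ 2)
    (hv : v = fun r => Real.exp (B r))
    (Sn : Matrix (Fin (n + 1)) (Fin (n + 1)) ℝ)
    (hSn : Sn = Matrix.of fun i j =>
      u (min (t i.castSucc) (t j.castSucc)) * v (max (t i.castSucc) (t j.castSucc)))
    (s : Fin (n + 1) → ℝ)
    (hs : s = fun i => Real.exp (B (t (Fin.last (n + 1))) - B (t i.castSucc)) *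
      (u (t i.castSucc) * v (t i.castSucc))) :
    u (t (Fin.last (n + 1))) * v (t (Fin.last (n + 1))) - s ⬝ᵥ (Sn⁻¹ *ᵥ s) =
      Real.exp (2 * B (t (Fin.last (n + 1)))) *
        ∫ ν in (t (Fin.last n).castSucc)..(t (Fin.last (n + 1))),
          Real.exp (-2 * B ν) * σ ν ^ 2 ∧
    0 < Real.exp (2 * B (t (Fin.last (n + 1)))) *
        ∫ ν in (t (Fin.last n).castSucc)..(t (Fin.last (n + 1))),
          Real.exp (-2 * B ν) * σ ν ^ 2 := by
  set f : ℝ → ℝ := fun ν => Real.exp (-2 * B ν) * σ ν ^ 2 with hf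
  have hfc : Continuous f := by fun_prop
  set I : ℝ → ℝ := fun r => ∫ ν in (0:ℝ)..r, f ν with hI
  have hsub (a b : ℝ) : ∫ ν in a..b, f ν = I b - I a :=
    (intervalIntegral.integral_interval_sub_left
      (hfc.intervalIntegrable _ _) (hfc.intervalIntegrable _ _)).symm
  have hpos {a b : ℝ} (hab : a < b) : I a < I b := by
    rw [← sub_pos, ← hsub]
    exact integral_weight_pos hB hσ hσpos hab
  have hu' (r : ℝ) : u r = Real.exp (B r) * I r := by rw [hu]
  have hv' (r : ℝ) : v r = Real.exp (B r) := by rw [hv]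
  have hI0 : I 0 = 0 := intervalIntegral.integral_same
  have hlast : t (Fin.last n).castSucc < t (Fin.last (n + 1)) :=
    htmono (Fin.castSucc_lt_last _)
  refine ⟨?_, mul_pos (Real.exp_pos _) (integral_weight_pos hB hσ hσpos hlast)⟩
  have hentry (i j : Fin (n + 1)) : Sn i j =
      Real.exp (B (t i.castSucc)) * (Real.exp (B (t j.castSucc)) *
        I (t (min i j).castSucc)) := by
    rw [hSn, Matrix.of_apply, hu', hv']
    rcases le_total i j with h | h
    · have h' : t i.castSucc ≤ t j.castSucc := htmono.monotone (by simpa using h)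
      rw [min_eq_left h', max_eq_right h', min_eq_left h]
      ring
    · have h' : t j.castSucc ≤ t i.castSucc := htmono.monotone (by simpa using h)
      rw [min_eq_right h', max_eq_left h', min_eq_right h]
      ring
  have hdet : Sn.det ≠ 0 := by
    -- `I` along the times, shifted by one so that the increments start from `I 0 = 0`.
    let b : ℕ → ℝ := fun k => Nat.casesOn k 0 (fun k => I (t (Fin.ofNat (n + 2) k)))
    have hbfin (i : Fin (n + 1)) : b ((i : ℕ) + 1) = I (t i.castSucc) := by
      have : Fin.ofNat (n + 2) (i : ℕ) = i.castSucc := by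
        ext
        simp [Fin.ofNat, Nat.mod_eq_of_lt (show (i : ℕ) < n + 2 by omega)]
      simp only [b, this]
    have hb : ∀ k < n + 1, b k < b (k + 1) := by
      rintro (_ | k) hk
      · have h0 := hbfin 0
        simp only [Fin.val_zero, zero_add, Fin.castSucc_zero] at h0
        rw [zero_add, h0, show b 0 = I 0 from hI0.symm]
        exact hpos ht0
      · have h1 := hbfin ⟨k, by omega⟩
        have h2 := hbfin ⟨k + 1, hk⟩
        simp only at h1 h2
        rw [h1, h2]
        exact hpos (htmono (by simp [Fin.lt_def]))
    have hfac : Sn = Matrix.diagonal (fun i => Real.exp (B (t i.castSucc))) *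
        (Matrix.of fun i j : Fin (n + 1) => b (min (i : ℕ) j + 1)) *
        Matrix.diagonal (fun i => Real.exp (B (t i.castSucc))) := by
      ext i j
      rw [Matrix.mul_diagonal, Matrix.diagonal_mul, Matrix.of_apply, hentry, ← hbfin,
        Fin.coe_min]
      ring
    rw [hfac, Matrix.det_mul, Matrix.det_mul, Matrix.det_diagonal]
    have hprod : ∏ i : Fin (n + 1), Real.exp (B (t i.castSucc)) ≠ 0 :=
      Finset.prod_ne_zero_iff.mpr fun i _ => (Real.exp_pos _).ne'
    exact mul_ne_zero (mul_ne_zero hprod (det_min_ne_zero _ b rfl hb)) hprod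
  set T := t (Fin.last (n + 1)) with hT
  set c := Real.exp (B T - B (t (Fin.last n).castSucc)) with hc
  have hs' (i : Fin (n + 1)) : s i = Real.exp (B T) * u (t i.castSucc) := by
    rw [hs]
    simp only [hv', Real.exp_sub]
    field_simp
  have hcol : s = Sn *ᵥ Pi.single (Fin.last n) c := by
    ext i
    rw [hs', Matrix.mulVec_single, hu']
    simp only [Pi.smul_apply, Matrix.col_apply, hentry, min_eq_left (Fin.le_last i), hc,
      Real.exp_sub, MulOpposite.smul_eq_mul_unop, MulOpposite.unop_op]
    field_simp
  have hinv : Sn⁻¹ *ᵥ s = Pi.single (Fin.last n) c := by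
    rw [hcol, Matrix.mulVec_mulVec, Matrix.nonsing_inv_mul _ (isUnit_iff_ne_zero.mpr hdet),
      Matrix.one_mulVec]
  rw [hinv, dotProduct_single, hs', hu', hu', hv', hsub, hc, Real.exp_sub, two_mul, Real.exp_add]
  field_simp
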